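/- (Unknown variance.) Assume N, M, n, m → ∞, p = n/N → 0, q = m/M → 0, and restrict the alternative to matrices S ∈ S_{nm,a} satisfying max_{i,j} s_{ij}/(σ√(NM)) → 0. If (a/σ)√(n m p q) → ∞ or liminf (a/σ)√(nm)/√(2(n log(1/p) + m log(1/q))) > 1, then the studentized test ψ̂* — with H → ∞ such that H = O((a² n m p q/σ²)^{1/4}) and with T_{nm} = √((2+δ) log(C(N,n)·C(M,m))) for some sufficiently small δ > 0 — has total error γ_{nm,a}(ψ̂*) → 0, i.e. α(ψ̂*) → 0 and the second-type error over the restricted alternative tends to 0. -/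

import Mathlib

/-!
The studentized test does not change when `Y` is multiplied by a positive constant, so `σ = 1` may
be assumed, with `S` replaced by `S / σ`.

First-type error: by Chebyshev's inequality `σ̂² ≥ c` with probability tending to one, for every
fixed `c < 1`. On that event a rejection requires `√c H ≤ t_lin` or `√c T < Y_C` for one of the
`G` submatrices `C`. The first is unlikely as `H → ∞`, and the union bound gives
`G exp(-c (2 + δ) (log G) / 2) → 0` for the second once `c (2 + δ) > 2`.

Second-type error: let `L` be the mean of `t_lin` and `ε = max s / √(NM) → 0`. Every alternative
has `L ≥ (a² n m p q)^{1/2}`, so `H² = O(L)` and, as `H → ∞`, also `L → ∞`. The linear part then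
rejects: `t_lin > L / 2` up to probability `exp(-L² / 8)`, while `H σ̂ < L / 2` holds by Markov's
inequality up to probability `4 H² (1 + ε L) / L² → 0`. Here `E σ̂² ≤ 1 + ε L`, because
`∑ s² ≤ max s · ∑ s`.
-/

open MeasureTheory ProbabilityTheory Filter Topology
open scoped Classical

noncomputable section

/-- Standard normal cumulative distribution function `Φ`. -/
def Phi (x : ℝ) : ℝ := ((gaussianReal 0 1) (Set.Iic x)).toReal

/-- Law `P_S` of the `N × M` observation matrix `Y_{ij} = s_{ij} + ξ_{ij}`
with i.i.d. standard Gaussian noise. -/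
def matLaw (N M : ℕ) (S : Fin N → Fin M → ℝ) : Measure ((Fin N × Fin M) → ℝ) :=
  Measure.pi fun ij => gaussianReal (S ij.1 ij.2) 1

/-- First-type error `α(ψ) = E_0 ψ`. -/
def alphaErr (N M : ℕ) (ψ : ((Fin N × Fin M) → ℝ) → ℝ) : ℝ :=
  ∫ y, ψ y ∂(matLaw N M fun _ _ => 0)

/-- Second-type error `β(ψ, S) = E_S (1 - ψ)`. -/
def betaErr (N M : ℕ) (S : Fin N → Fin M → ℝ) (ψ : ((Fin N × Fin M) → ℝ) → ℝ) : ℝ :=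
  ∫ y, (1 - ψ y) ∂(matLaw N M S)

/-- The alternative class `S_{nm,a}`: some `n × m` submatrix `C = A × B` has all entries `≥ a`,
and all other entries vanish. -/
def SAlt (N M n m : ℕ) (a : ℝ) : Set (Fin N → Fin M → ℝ) :=
  {S | ∃ (A : Finset (Fin N)) (B : Finset (Fin M)), A.card = n ∧ B.card = m ∧
      (∀ i j, i ∈ A → j ∈ B → a ≤ S i j) ∧ ∀ i j, ¬(i ∈ A ∧ j ∈ B) → S i j = 0}

/-- Maximal second-type error `β_{nm,a}(ψ)`. -/
def betaMax (N M n m : ℕ) (a : ℝ) (ψ : ((Fin N × Fin M) → ℝ) → ℝ) : ℝ :=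
  sSup ((fun S => betaErr N M S ψ) '' SAlt N M n m a)

/-- Linear statistic `t_lin`. -/
def tlin (N M : ℕ) (y : (Fin N × Fin M) → ℝ) : ℝ :=
  (∑ ij : Fin N × Fin M, y ij) / Real.sqrt ((N : ℝ) * M)

/-- Linear test `ψ^lin_H = 1{t_lin > H}`. -/
def psiLin (N M : ℕ) (H : ℝ) (y : (Fin N × Fin M) → ℝ) : ℝ :=
  if H < tlin N M y then 1 else 0

/-- Normalized submatrix sum `Y_C` for `C = A × B`. -/
def YC (N M : ℕ) (y : (Fin N × Fin M) → ℝ)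
    (A : Finset (Fin N)) (B : Finset (Fin M)) : ℝ :=
  (∑ i ∈ A, ∑ j ∈ B, y (i, j)) / Real.sqrt ((A.card : ℝ) * B.card)

/-- Scan statistic `t_max = max_{C ∈ C_{nm}} Y_C`. -/
def tmax (N M n m : ℕ) (y : (Fin N × Fin M) → ℝ) : ℝ :=
  sSup {v | ∃ (A : Finset (Fin N)) (B : Finset (Fin M)),
    A.card = n ∧ B.card = m ∧ v = YC N M y A B}

/-- `G_{nm} = C(N,n) · C(M,m)`, the number of `n × m` submatrices. -/
def Gnm (N M n m : ℕ) : ℕ := N.choose n * M.choose m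

/-- Threshold `T_{nm} = √(2 log G_{nm})`. -/
def Tnm (N M n m : ℕ) : ℝ := Real.sqrt (2 * Real.log (Gnm N M n m : ℝ))

/-- Scan test `ψ^max_T = 1{t_max > T}`. -/
def psiMax (N M n m : ℕ) (T : ℝ) (y : (Fin N × Fin M) → ℝ) : ℝ :=
  if T < tmax N M n m y then 1 else 0

/-- Law of the observation matrix `Y_{ij} = s_{ij} + σ ξ_{ij}` with noise level `σ`. -/
def matLawV (N M : ℕ) (σ : ℝ) (S : Fin N → Fin M → ℝ) :
    Measure ((Fin N × Fin M) → ℝ) :=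
  Measure.pi fun ij => gaussianReal (S ij.1 ij.2) (Real.toNNReal (σ ^ 2))

/-- Variance estimator `σ̂ = √((NM)⁻¹ Σ Y_{ij}²)`. -/
def sigmaHat (N M : ℕ) (y : (Fin N × Fin M) → ℝ) : ℝ :=
  Real.sqrt ((∑ ij : Fin N × Fin M, (y ij) ^ 2) / ((N : ℝ) * M))

/-- Studentized test `ψ̂* = max{1{t̂_lin > H}, 1{t̂_max > T}}`. -/
def psiHatStar (N M n m : ℕ) (H T : ℝ) (y : (Fin N × Fin M) → ℝ) : ℝ :=
  max (if H < tlin N M y / sigmaHat N M y then 1 else 0)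
    (if T < tmax N M n m y / sigmaHat N M y then 1 else 0)

section Probability

variable {Ω : Type*} [MeasurableSpace Ω]

lemma integral_le_measureReal_of_le_one {μ : Measure Ω} [IsFiniteMeasure μ] {f : Ω → ℝ}
    {E : Set Ω} (hf_one : ∀ ω ∈ E, f ω ≤ 1) (hf_nonpos : ∀ ω ∉ E, f ω ≤ 0) :
    ∫ ω, f ω ∂μ ≤ μ.real E :=
  (ENNReal.ofReal_le_iff_le_toReal (measure_ne_top μ E)).1 (integral_le_measure hf_one hf_nonpos)

lemma hasSubgaussianMGF_id_gaussianReal (v : NNReal) :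
    HasSubgaussianMGF id v (gaussianReal 0 v) where
  integrable_exp_mul := integrable_exp_mul_gaussianReal
  mgf_le t := by simp [mgf_id_gaussianReal]

lemma hasSubgaussianMGF_mono {μ : Measure Ω} {X : Ω → ℝ} {c d : NNReal}
    (h : HasSubgaussianMGF X c μ) (hcd : c ≤ d) : HasSubgaussianMGF X d μ where
  integrable_exp_mul := h.integrable_exp_mul
  mgf_le t := (h.mgf_le t).trans (by gcongr)

lemma hasSubgaussianMGF_sum_div_sqrt_card {ι : Type*} {μ : Measure Ω} {X : ι → Ω → ℝ}
    (hX_indep : iIndepFun X μ) {v : NNReal} {F : Finset ι}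
    (hX : ∀ i ∈ F, HasSubgaussianMGF (X i) v μ) :
    HasSubgaussianMGF (fun ω ↦ (∑ i ∈ F, X i ω) / √F.card) v μ := by
  have h := (HasSubgaussianMGF.sum_of_iIndepFun hX_indep hX).const_mul (√F.card)⁻¹
  simp only [inv_mul_eq_div] at h
  refine hasSubgaussianMGF_mono h ?_
  have hcard : (F.card : ℝ)⁻¹ * F.card ≤ 1 := inv_mul_le_one
  change (√F.card)⁻¹ ^ 2 * ((∑ _i ∈ F, v : NNReal) : ℝ) ≤ v
  simpa [inv_pow, ← mul_assoc] using mul_le_of_le_one_left v.coe_nonneg hcard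

lemma memLp_sq_gaussianReal (s : ℝ) (v : NNReal) :
    MemLp (fun x : ℝ ↦ x ^ 2) 2 (gaussianReal s v) := by
  rw [memLp_two_iff_integrable_sq (by fun_prop)]
  have h := (memLp_id_gaussianReal (μ := s) (v := v) 4).integrable_norm_pow four_ne_zero
  simpa [← pow_mul, Even.pow_abs (by decide : Even 4)] using h

lemma integral_sq_gaussianReal (s : ℝ) (v : NNReal) :
    ∫ x, x ^ 2 ∂gaussianReal s v = v + s ^ 2 := by
  have h : Var[id; gaussianReal s v] = ∫ x, x ^ 2 ∂gaussianReal s v - s ^ 2 := by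
    simpa using variance_eq_sub (memLp_id_gaussianReal (μ := s) (v := v) 2)
  rw [variance_id_gaussianReal] at h
  linarith

lemma variance_sum_div_card_pi {ι : Type*} [Fintype ι] {ν : Measure Ω} [IsProbabilityMeasure ν]
    {X : Ω → ℝ} (hX : MemLp X 2 ν) :
    Var[fun ω : ι → Ω ↦ (∑ i, X (ω i)) / Fintype.card ι; Measure.pi fun _ ↦ ν] =
      Var[X; ν] / Fintype.card ι := by
  have hsum : Var[fun ω : ι → Ω ↦ ∑ i, X (ω i); Measure.pi fun _ ↦ ν] =
      Fintype.card ι * Var[X; ν] := by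
    simpa [Finset.sum_fn] using variance_sum_pi (μ := fun _ : ι ↦ ν) fun _ ↦ hX
  simp only [div_eq_inv_mul, variance_const_mul, hsum]
  field_simp

end Probability

section ScaleInvariance

variable {N M : ℕ}

lemma tlin_eq_YC_univ (y : Fin N × Fin M → ℝ) :
    tlin N M y = YC N M y Finset.univ Finset.univ := by
  simp [tlin, YC, Fintype.sum_prod_type]

lemma YC_smul (r : ℝ) (y : Fin N × Fin M → ℝ) (A : Finset (Fin N)) (B : Finset (Fin M)) :
    YC N M (r • y) A B = r * YC N M y A B := by
  simp [YC, ← Finset.mul_sum, mul_div_assoc]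

lemma tlin_smul (r : ℝ) (y : Fin N × Fin M → ℝ) : tlin N M (r • y) = r * tlin N M y := by
  simp only [tlin_eq_YC_univ, YC_smul]

lemma tmax_smul (n m : ℕ) {r : ℝ} (hr : 0 ≤ r) (y : Fin N × Fin M → ℝ) :
    tmax N M n m (r • y) = r * tmax N M n m y := by
  unfold tmax
  rw [← smul_eq_mul, ← Real.sSup_smul_of_nonneg hr]
  congr 1
  ext v
  simp only [YC_smul, Set.mem_smul_set, smul_eq_mul]
  constructor
  · rintro ⟨A, B, hA, hB, rfl⟩
    exact ⟨_, ⟨A, B, hA, hB, rfl⟩, rfl⟩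
  · rintro ⟨_, ⟨A, B, hA, hB, rfl⟩, rfl⟩
    exact ⟨A, B, hA, hB, rfl⟩

lemma sq_sigmaHat (y : Fin N × Fin M → ℝ) :
    sigmaHat N M y ^ 2 = (∑ ij, y ij ^ 2) / ((N : ℝ) * M) :=
  Real.sq_sqrt (by positivity)

lemma sigmaHat_smul {r : ℝ} (hr : 0 ≤ r) (y : Fin N × Fin M → ℝ) :
    sigmaHat N M (r • y) = r * sigmaHat N M y := by
  simp [sigmaHat, mul_pow, ← Finset.mul_sum, mul_div_assoc, Real.sqrt_mul (sq_nonneg r),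
    Real.sqrt_sq hr]

lemma psiHatStar_smul (n m : ℕ) (H T : ℝ) {r : ℝ} (hr : 0 < r) (y : Fin N × Fin M → ℝ) :
    psiHatStar N M n m H T (r • y) = psiHatStar N M n m H T y := by
  simp only [psiHatStar, tlin_smul, tmax_smul n m hr.le, sigmaHat_smul hr.le,
    mul_div_mul_left _ _ hr.ne']

lemma map_smul_matLaw (σ : ℝ) (S : Fin N → Fin M → ℝ) :
    (matLaw N M S).map (σ • ·) = matLawV N M σ (σ • S) := by
  have hmap (s : ℝ) :
      (gaussianReal s 1).map (σ * ·) = gaussianReal (σ * s) (Real.toNNReal (σ ^ 2)) := by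
    rw [gaussianReal_map_const_mul, Real.toNNReal_of_nonneg (sq_nonneg σ), mul_one]
  have (ij : Fin N × Fin M) : SigmaFinite ((gaussianReal (S ij.1 ij.2) 1).map (σ * ·)) := by
    rw [hmap]; infer_instance
  have hpi := Measure.pi_map_pi (μ := fun ij : Fin N × Fin M ↦ gaussianReal (S ij.1 ij.2) 1)
    (f := fun _ x ↦ σ * x) fun _ ↦ by fun_prop
  simp only [hmap] at hpi
  exact hpi

lemma integral_matLawV {σ : ℝ} (hσ : 0 < σ) (S : Fin N → Fin M → ℝ)
    {f : (Fin N × Fin M → ℝ) → ℝ} (hf : ∀ y, f (σ • y) = f y) :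
    ∫ y, f y ∂matLawV N M σ S = ∫ y, f y ∂matLaw N M (σ⁻¹ • S) := by
  rw [← smul_inv_smul₀ hσ.ne' S, ← map_smul_matLaw,
    (measurableEmbedding_const_smul₀ hσ.ne').integral_map, inv_smul_smul₀ hσ.ne']
  simp only [hf]

lemma integral_psiHatStar_matLawV_zero (n m : ℕ) (H T : ℝ) {σ : ℝ} (hσ : 0 < σ) :
    ∫ y, psiHatStar N M n m H T y ∂(matLawV N M σ fun _ _ ↦ 0) =
      alphaErr N M (psiHatStar N M n m H T) := by
  rw [integral_matLawV hσ _ (psiHatStar_smul n m H T hσ), alphaErr]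
  congr
  ext
  simp

lemma integral_one_sub_psiHatStar_matLawV (n m : ℕ) (H T : ℝ) {σ : ℝ} (hσ : 0 < σ)
    (S : Fin N → Fin M → ℝ) :
    ∫ y, (1 - psiHatStar N M n m H T y) ∂matLawV N M σ S =
      betaErr N M (σ⁻¹ • S) (psiHatStar N M n m H T) :=
  integral_matLawV hσ S fun y ↦ by rw [psiHatStar_smul n m H T hσ]

end ScaleInvariance

section ErrorBounds

open Function (uncurry)

variable {N M : ℕ}

instance isProbabilityMeasure_matLaw (S : Fin N → Fin M → ℝ) :
    IsProbabilityMeasure (matLaw N M S) :=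
  inferInstanceAs <| IsProbabilityMeasure <|
    Measure.pi fun ij : Fin N × Fin M ↦ gaussianReal (S ij.1 ij.2) 1

lemma hasSubgaussianMGF_YC_sub (S : Fin N → Fin M → ℝ) (A : Finset (Fin N))
    (B : Finset (Fin M)) :
    HasSubgaussianMGF (fun y ↦ YC N M y A B - YC N M (uncurry S) A B) 1 (matLaw N M S) := by
  have hindep : iIndepFun (fun ij (y : Fin N × Fin M → ℝ) ↦ y ij - S ij.1 ij.2)
      (matLaw N M S) :=
    iIndepFun_pi (X := fun (ij : Fin N × Fin M) x ↦ x - S ij.1 ij.2) fun _ ↦ by fun_prop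
  have hentry (ij : Fin N × Fin M) :
      HasSubgaussianMGF (fun y : Fin N × Fin M → ℝ ↦ y ij - S ij.1 ij.2) 1 (matLaw N M S) := by
    refine .of_map (X := id) (Measurable.aemeasurable (by fun_prop)) ?_
    have hmap := (measurePreserving_eval
      (fun ij : Fin N × Fin M ↦ gaussianReal (S ij.1 ij.2) 1) ij).map_eq
    have hcenter : (matLaw N M S).map (fun y ↦ y ij - S ij.1 ij.2) = gaussianReal 0 1 := by
      rw [← sub_self (S ij.1 ij.2), ← gaussianReal_map_sub_const, ← hmap,
        Measure.map_map (by fun_prop) (by fun_prop)]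
      rfl
    rw [hcenter]
    exact hasSubgaussianMGF_id_gaussianReal 1
  have h := hasSubgaussianMGF_sum_div_sqrt_card hindep (F := A ×ˢ B) fun ij _ ↦ hentry ij
  simpa [YC, Finset.sum_product, sub_div] using h

lemma measureReal_le_YC_le {u : ℝ} (hu : 0 ≤ u) (A : Finset (Fin N)) (B : Finset (Fin M)) :
    (matLaw N M fun _ _ ↦ 0).real {y | u ≤ YC N M y A B} ≤ Real.exp (-u ^ 2 / 2) := by
  simpa [YC, uncurry] using (hasSubgaussianMGF_YC_sub (fun _ _ ↦ 0) A B).measure_ge_le hu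

lemma measureReal_tlin_le_le (S : Fin N → Fin M → ℝ) {u : ℝ} (hu : 0 ≤ u) :
    (matLaw N M S).real {y | tlin N M y ≤ tlin N M (uncurry S) - u} ≤ Real.exp (-u ^ 2 / 2) := by
  have h := (hasSubgaussianMGF_YC_sub S Finset.univ Finset.univ).neg.measure_ge_le hu
  simpa [← tlin_eq_YC_univ, le_sub_comm] using h

lemma tmax_le {n m : ℕ} {y : Fin N × Fin M → ℝ} {u : ℝ} (hu : 0 ≤ u)
    (h : ∀ A ∈ Finset.powersetCard n Finset.univ, ∀ B ∈ Finset.powersetCard m Finset.univ,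
      YC N M y A B ≤ u) :
    tmax N M n m y ≤ u := by
  -- Without `n × m` submatrices, `tmax` is the junk value `sSup ∅ = 0`.
  refine Real.sSup_le ?_ hu
  rintro _ ⟨A, B, hA, hB, rfl⟩
  exact h A (by simpa using hA) B (by simpa using hB)

lemma measureReal_lt_tmax_le (n m : ℕ) {u : ℝ} (hu : 0 ≤ u) :
    (matLaw N M fun _ _ ↦ 0).real {y | u < tmax N M n m y} ≤
      Gnm N M n m * Real.exp (-u ^ 2 / 2) := by
  set I := Finset.powersetCard n (Finset.univ : Finset (Fin N)) ×ˢ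
    Finset.powersetCard m (Finset.univ : Finset (Fin M))
  have hcover : {y | u < tmax N M n m y} ⊆ ⋃ C ∈ I, {y | u ≤ YC N M y C.1 C.2} := by
    intro y hy
    contrapose! hy
    simp only [Set.mem_iUnion, Set.mem_ofPred_eq, not_exists, not_le, I,
      Finset.mem_product] at hy ⊢
    exact not_lt.2 <| tmax_le hu fun A hA B hB ↦ (hy (A, B) ⟨hA, hB⟩).le
  calc
    _ ≤ (matLaw N M fun _ _ ↦ 0).real (⋃ C ∈ I, {y | u ≤ YC N M y C.1 C.2}) :=
      measureReal_mono hcover (measure_ne_top _ _)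
    _ ≤ ∑ C ∈ I, (matLaw N M fun _ _ ↦ 0).real {y | u ≤ YC N M y C.1 C.2} :=
      measureReal_biUnion_finset_le _ _
    _ ≤ ∑ _C ∈ I, Real.exp (-u ^ 2 / 2) :=
      Finset.sum_le_sum fun C _ ↦ measureReal_le_YC_le hu C.1 C.2
    _ = Gnm N M n m * Real.exp (-u ^ 2 / 2) := by simp [I, Gnm]

lemma memLp_sq_eval_matLaw (S : Fin N → Fin M → ℝ) (ij : Fin N × Fin M) :
    MemLp (fun y ↦ y ij ^ 2) 2 (matLaw N M S) :=
  (memLp_sq_gaussianReal (S ij.1 ij.2) 1).comp_measurePreserving (measurePreserving_eval _ ij)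

lemma memLp_sq_sigmaHat (S : Fin N → Fin M → ℝ) :
    MemLp (fun y ↦ sigmaHat N M y ^ 2) 2 (matLaw N M S) := by
  simp only [sq_sigmaHat, div_eq_inv_mul]
  exact (memLp_finsetSum _ fun ij _ ↦ memLp_sq_eval_matLaw S ij).const_mul _

lemma integral_sq_sigmaHat (hNM : (N : ℝ) * M ≠ 0) (S : Fin N → Fin M → ℝ) :
    ∫ y, sigmaHat N M y ^ 2 ∂matLaw N M S =
      1 + (∑ ij : Fin N × Fin M, S ij.1 ij.2 ^ 2) / ((N : ℝ) * M) := by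
  have hentry (ij : Fin N × Fin M) :
      ∫ y, y ij ^ 2 ∂matLaw N M S = 1 + S ij.1 ij.2 ^ 2 := by
    have h := integral_comp_eval (μ := fun ij : Fin N × Fin M ↦ gaussianReal (S ij.1 ij.2) 1)
      (i := ij) (f := fun x : ℝ ↦ x ^ 2) (by fun_prop)
    rwa [integral_sq_gaussianReal, NNReal.coe_one] at h
  simp only [sq_sigmaHat, integral_div]
  rw [integral_finsetSum _ fun ij _ ↦ (memLp_sq_eval_matLaw S ij).integrable one_le_two]
  simp only [hentry, Finset.sum_add_distrib, add_div]
  simp [div_self hNM]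

lemma variance_sq_sigmaHat_zero :
    Var[fun y ↦ sigmaHat N M y ^ 2; matLaw N M fun _ _ ↦ 0] =
      Var[fun x ↦ x ^ 2; gaussianReal 0 1] / ((N : ℝ) * M) := by
  simpa [sq_sigmaHat, matLaw] using
    variance_sum_div_card_pi (ι := Fin N × Fin M) (memLp_sq_gaussianReal 0 1)

lemma measureReal_sq_sigmaHat_lt_le (hNM : (N : ℝ) * M ≠ 0) {c : ℝ} (hc : c < 1) :
    (matLaw N M fun _ _ ↦ 0).real {y | sigmaHat N M y ^ 2 < c} ≤
      Var[fun x ↦ x ^ 2; gaussianReal 0 1] / ((N : ℝ) * M) / (1 - c) ^ 2 := by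
  have hmean : ∫ y, sigmaHat N M y ^ 2 ∂(matLaw N M fun _ _ ↦ 0) = 1 := by
    simp [integral_sq_sigmaHat hNM]
  have h := meas_ge_le_variance_div_sq
    (memLp_sq_sigmaHat (N := N) (M := M) fun _ _ ↦ 0) (sub_pos.2 hc)
  rw [hmean, variance_sq_sigmaHat_zero] at h
  have hV := variance_nonneg (fun x : ℝ ↦ x ^ 2) (gaussianReal 0 1)
  refine ENNReal.toReal_le_of_le_ofReal (by positivity) (le_trans (measure_mono ?_) h)
  intro y (hy : sigmaHat N M y ^ 2 < c)
  change 1 - c ≤ |sigmaHat N M y ^ 2 - 1|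
  exact le_abs.2 (.inr (by linarith))

lemma psiHatStar_nonneg (n m : ℕ) (H T : ℝ) (y : Fin N × Fin M → ℝ) :
    0 ≤ psiHatStar N M n m H T y :=
  le_max_of_le_left (by split_ifs <;> norm_num)

lemma psiHatStar_le_one (n m : ℕ) (H T : ℝ) (y : Fin N × Fin M → ℝ) :
    psiHatStar N M n m H T y ≤ 1 :=
  max_le (by split_ifs <;> norm_num) (by split_ifs <;> norm_num)

lemma psiHatStar_eq_zero {n m : ℕ} {H T r : ℝ} (hH : 0 ≤ H) (hT : 0 ≤ T)
    {y : Fin N × Fin M → ℝ} (hσ : r ≤ sigmaHat N M y) (hlin : tlin N M y ≤ r * H)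
    (hmax : tmax N M n m y ≤ r * T) :
    psiHatStar N M n m H T y = 0 := by
  have hle {x U : ℝ} (hU : 0 ≤ U) (hx : x ≤ r * U) : x / sigmaHat N M y ≤ U :=
    div_le_of_le_mul₀ (Real.sqrt_nonneg _) hU (hx.trans (by rw [mul_comm]; gcongr))
  simp [psiHatStar, (hle hH hlin).not_gt, (hle hT hmax).not_gt]

lemma sigmaHat_pos {y : Fin N × Fin M → ℝ} (hlin : 0 < tlin N M y) : 0 < sigmaHat N M y := by
  have hNM : (N : ℝ) * M ≠ 0 := by
    rintro h
    simp [tlin, h] at hlin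
  obtain ⟨ij, -, hij⟩ : ∃ ij ∈ Finset.univ, y ij ≠ 0 := by
    refine Finset.exists_ne_zero_of_sum_ne_zero fun h ↦ ?_
    simp [tlin, h] at hlin
  have hsum : 0 < ∑ ij, y ij ^ 2 :=
    Finset.sum_pos' (fun _ _ ↦ sq_nonneg _) ⟨ij, Finset.mem_univ _, by positivity⟩
  exact Real.sqrt_pos.2 (by positivity)

lemma psiHatStar_eq_one {n m : ℕ} {H T : ℝ} {y : Fin N × Fin M → ℝ} (hlin : 0 < tlin N M y)
    (hH : H * sigmaHat N M y < tlin N M y) :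
    psiHatStar N M n m H T y = 1 := by
  refine le_antisymm (psiHatStar_le_one ..) (le_max_of_le_left ?_)
  rw [if_pos ((lt_div_iff₀ (sigmaHat_pos hlin)).2 hH)]

lemma alphaErr_psiHatStar_le (hNM : (N : ℝ) * M ≠ 0) (n m : ℕ) {H T c : ℝ} (hH : 0 ≤ H)
    (hT : 0 ≤ T) (hc₀ : 0 ≤ c) (hc₁ : c < 1) :
    alphaErr N M (psiHatStar N M n m H T) ≤
      Var[fun x ↦ x ^ 2; gaussianReal 0 1] / ((N : ℝ) * M) / (1 - c) ^ 2 +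
        Real.exp (-(c * H ^ 2) / 2) + Gnm N M n m * Real.exp (-(c * T ^ 2) / 2) := by
  set P := matLaw N M fun _ _ ↦ 0
  set E₁ := {y | sigmaHat N M y ^ 2 < c}
  set E₂ := {y | √c * H ≤ tlin N M y}
  set E₃ := {y | √c * T < tmax N M n m y}
  have hzero : ∀ y ∉ E₁ ∪ E₂ ∪ E₃, psiHatStar N M n m H T y ≤ 0 := by
    intro y hy
    simp only [E₁, E₂, E₃, Set.mem_union, Set.mem_ofPred_eq, not_or, not_lt, not_le] at hy
    obtain ⟨⟨hσ, hlin⟩, hmax⟩ := hy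
    exact (psiHatStar_eq_zero hH hT ((Real.sqrt_le_left (Real.sqrt_nonneg _)).2 hσ) hlin.le
      hmax).le
  have hE₂ : P.real E₂ ≤ Real.exp (-(c * H ^ 2) / 2) := by
    simpa [E₂, tlin_eq_YC_univ, mul_pow, Real.sq_sqrt hc₀] using
      measureReal_le_YC_le (by positivity : 0 ≤ √c * H) Finset.univ Finset.univ
  have hE₃ : P.real E₃ ≤ Gnm N M n m * Real.exp (-(c * T ^ 2) / 2) := by
    simpa [mul_pow, Real.sq_sqrt hc₀] using
      measureReal_lt_tmax_le n m (by positivity : 0 ≤ √c * T)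
  calc
    alphaErr N M (psiHatStar N M n m H T) ≤ P.real (E₁ ∪ E₂ ∪ E₃) :=
      integral_le_measureReal_of_le_one (fun y _ ↦ psiHatStar_le_one n m H T y) hzero
    _ ≤ P.real E₁ + P.real E₂ + P.real E₃ :=
      (measureReal_union_le _ _).trans (by gcongr; exact measureReal_union_le _ _)
    _ ≤ _ := by gcongr; exact measureReal_sq_sigmaHat_lt_le hNM hc₁

lemma integral_sq_sigmaHat_le (hNM : (N : ℝ) * M ≠ 0) {S : Fin N → Fin M → ℝ} {ε : ℝ}
    (hS₀ : ∀ i j, 0 ≤ S i j) (hS : ∀ i j, S i j ≤ ε * √((N : ℝ) * M)) :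
    ∫ y, sigmaHat N M y ^ 2 ∂matLaw N M S ≤ 1 + ε * tlin N M (uncurry S) := by
  have hsqrt : √((N : ℝ) * M) ^ 2 = N * M := Real.sq_sqrt (by positivity)
  have hsqrt₀ : √((N : ℝ) * M) ≠ 0 := fun h ↦ hNM (by rw [← hsqrt, h]; simp)
  rw [integral_sq_sigmaHat hNM]
  gcongr
  calc
    (∑ ij : Fin N × Fin M, S ij.1 ij.2 ^ 2) / ((N : ℝ) * M)
      ≤ (∑ ij : Fin N × Fin M, ε * √((N : ℝ) * M) * S ij.1 ij.2) / ((N : ℝ) * M) := by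
        gcongr with ij
        rw [sq]
        exact mul_le_mul_of_nonneg_right (hS _ _) (hS₀ _ _)
    _ = ε * tlin N M (uncurry S) := by
        rw [← Finset.mul_sum, tlin, ← hsqrt, Real.sqrt_sq (Real.sqrt_nonneg _)]
        simp only [uncurry]
        field_simp

lemma betaErr_psiHatStar_le {S : Fin N → Fin M → ℝ} {ε : ℝ} (hS₀ : ∀ i j, 0 ≤ S i j)
    (hS : ∀ i j, S i j ≤ ε * √((N : ℝ) * M)) (hL : 0 < tlin N M (uncurry S)) (n m : ℕ)
    (H T : ℝ) :
    betaErr N M S (psiHatStar N M n m H T) ≤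
      4 * (H ^ 2 * (1 + ε * tlin N M (uncurry S)) / tlin N M (uncurry S) ^ 2) +
        Real.exp (-tlin N M (uncurry S) ^ 2 / 8) := by
  set L := tlin N M (uncurry S) with hL_def
  set P := matLaw N M S
  have hNM : (N : ℝ) * M ≠ 0 := by
    intro h
    simp [hL_def, tlin, h] at hL
  set E₁ := {y | L ^ 2 / 4 ≤ H ^ 2 * sigmaHat N M y ^ 2}
  set E₂ := {y | tlin N M y ≤ L - L / 2}
  have hone : ∀ y ∉ E₁ ∪ E₂, 1 - psiHatStar N M n m H T y ≤ 0 := by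
    intro y hy
    simp only [E₁, E₂, Set.mem_union, Set.mem_ofPred_eq, not_or, not_le, sub_half] at hy
    have hHσ : H * sigmaHat N M y < L / 2 := by
      refine lt_of_pow_lt_pow_left₀ 2 (by positivity) ?_
      linarith [hy.1, mul_pow H (sigmaHat N M y) 2, div_pow L 2 2]
    rw [psiHatStar_eq_one ((half_pos hL).trans hy.2) (hHσ.trans hy.2), sub_self]
  have hE₁ : P.real E₁ ≤ 4 * (H ^ 2 * (1 + ε * L) / L ^ 2) := by
    have hmarkov := mul_meas_ge_le_integral_of_nonneg
      (f := fun y ↦ H ^ 2 * sigmaHat N M y ^ 2) (ae_of_all P fun y ↦ by positivity)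
      (((memLp_sq_sigmaHat S).integrable one_le_two).const_mul _) (L ^ 2 / 4)
    rw [integral_const_mul] at hmarkov
    have hmean : H ^ 2 * ∫ y, sigmaHat N M y ^ 2 ∂P ≤ H ^ 2 * (1 + ε * L) := by
      gcongr
      exact integral_sq_sigmaHat_le hNM hS₀ hS
    rw [← mul_div_assoc, le_div_iff₀ (by positivity)]
    linarith [hmarkov.trans hmean]
  have hE₂ : P.real E₂ ≤ Real.exp (-L ^ 2 / 8) := by
    convert measureReal_tlin_le_le S (half_pos hL).le using 2
    ring
  calc
    betaErr N M S (psiHatStar N M n m H T) ≤ P.real (E₁ ∪ E₂) :=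
      integral_le_measureReal_of_le_one
        (fun y _ ↦ sub_le_self _ (psiHatStar_nonneg n m H T y)) hone
    _ ≤ P.real E₁ + P.real E₂ := measureReal_union_le _ _
    _ ≤ _ := add_le_add hE₁ hE₂

end ErrorBounds

section Alternative

open Function (uncurry)

variable {N M n m : ℕ} {a : ℝ} {S : Fin N → Fin M → ℝ}

lemma smul_mem_SAlt {r : ℝ} (hr : 0 ≤ r) (hS : S ∈ SAlt N M n m a) :
    r • S ∈ SAlt N M n m (r * a) := by
  obtain ⟨A, B, hA, hB, hle, hzero⟩ := hS
  refine ⟨A, B, hA, hB, fun i j hi hj ↦ mul_le_mul_of_nonneg_left (hle i j hi hj) hr, ?_⟩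
  intro i j hij
  simp [hzero i j hij]

lemma nonneg_of_mem_SAlt (ha : 0 ≤ a) (hS : S ∈ SAlt N M n m a) (i : Fin N) (j : Fin M) :
    0 ≤ S i j := by
  obtain ⟨A, B, -, -, hle, hzero⟩ := hS
  by_cases hij : i ∈ A ∧ j ∈ B
  · exact ha.trans (hle i j hij.1 hij.2)
  · exact (hzero i j hij).ge

lemma le_tlin_of_mem_SAlt (ha : 0 ≤ a) (hS : S ∈ SAlt N M n m a) :
    n * m * a / √((N : ℝ) * M) ≤ tlin N M (uncurry S) := by
  have hS₀ := nonneg_of_mem_SAlt ha hS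
  obtain ⟨A, B, rfl, rfl, hle, -⟩ := hS
  unfold tlin
  gcongr
  calc
    (A.card * B.card * a : ℝ) = ∑ _ij ∈ A ×ˢ B, a := by simp
    _ ≤ ∑ ij ∈ A ×ˢ B, uncurry S ij := by
      refine Finset.sum_le_sum fun ij hij ↦ ?_
      exact hle ij.1 ij.2 (Finset.mem_product.1 hij).1 (Finset.mem_product.1 hij).2
    _ ≤ ∑ ij, uncurry S ij :=
      Finset.sum_le_univ_sum_of_nonneg fun ij ↦ hS₀ ij.1 ij.2

lemma sq_rpow_one_fourth_signal (n m N M : ℕ) (ha : 0 ≤ a) {σ : ℝ} (hσ : 0 ≤ σ) :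
    ((a ^ 2 * ((n : ℝ) * m * ((n : ℝ) / N) * ((m : ℝ) / M)) / σ ^ 2) ^ ((1 : ℝ) / 4)) ^ 2 =
      n * m * (σ⁻¹ * a) / √((N : ℝ) * M) := by
  have hbase : a ^ 2 * ((n : ℝ) * m * ((n : ℝ) / N) * ((m : ℝ) / M)) / σ ^ 2 =
      (n * m * (σ⁻¹ * a) / √((N : ℝ) * M)) ^ 2 := by
    rw [div_pow, Real.sq_sqrt (by positivity)]
    ring
  rw [hbase, ← Real.rpow_mul_natCast (sq_nonneg _), ← Real.rpow_natCast_mul (by positivity)]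
  norm_num

lemma le_iSup_div_mul_sqrt (S : Fin N → Fin M → ℝ) {σ : ℝ} (hσ : 0 < σ) (i : Fin N)
    (j : Fin M) :
    (σ⁻¹ • S) i j ≤
      (⨆ ij : Fin N × Fin M, S ij.1 ij.2) / (σ * √((N : ℝ) * M)) * √((N : ℝ) * M) := by
  have hNM : 0 < √((N : ℝ) * M) :=
    Real.sqrt_pos.2 (mul_pos (Nat.cast_pos.2 i.pos) (Nat.cast_pos.2 j.pos))
  have hle : S i j ≤ ⨆ ij : Fin N × Fin M, S ij.1 ij.2 :=
    le_ciSup (f := fun ij : Fin N × Fin M ↦ S ij.1 ij.2) (Set.finite_range _).bddAbove (i, j)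
  calc
    (σ⁻¹ • S) i j = S i j / σ := inv_mul_eq_div _ _
    _ ≤ (⨆ ij : Fin N × Fin M, S ij.1 ij.2) / σ := by gcongr
    _ = _ := by field_simp

end Alternative

section Limits

open Asymptotics
open Function (uncurry)

lemma div_le_choose {N n : ℕ} (hn : 1 ≤ n) (hnN : n ≤ N) : (N : ℝ) / n ≤ N.choose n := by
  obtain ⟨k, rfl⟩ := Nat.exists_eq_add_of_le' hn
  obtain ⟨K, rfl⟩ := Nat.exists_eq_add_of_le' (hn.trans hnN)
  have hmul : K + 1 ≤ (K + 1).choose (k + 1) * (k + 1) := by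
    rw [← Nat.add_one_mul_choose_eq]
    exact Nat.le_mul_of_pos_right _ (Nat.choose_pos (Nat.le_of_succ_le_succ hnN))
  exact div_le_of_le_mul₀ (by positivity) (by positivity) (by exact_mod_cast hmul)

variable {ι : Type*} {l : Filter ι} {N M n m : ι → ℕ} {H : ι → ℝ}

lemma tendsto_Gnm_atTop (hn : ∀ t, 1 ≤ n t) (hnN : ∀ t, n t ≤ N t) (hmM : ∀ t, m t ≤ M t)
    (hp : Tendsto (fun t ↦ (n t : ℝ) / N t) l (𝓝 0)) :
    Tendsto (fun t ↦ (Gnm (N t) (M t) (n t) (m t) : ℝ)) l atTop := by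
  have hp_pos (t : ι) : (0 : ℝ) < (n t : ℝ) / N t :=
    div_pos (Nat.cast_pos.2 (hn t)) (Nat.cast_pos.2 ((hn t).trans (hnN t)))
  have hinv := Tendsto.inv_tendsto_nhdsGT_zero
    (tendsto_nhdsWithin_iff.2 ⟨hp, .of_forall hp_pos⟩)
  refine tendsto_atTop_mono (fun t ↦ ?_) hinv
  calc
    ((n t : ℝ) / N t)⁻¹ = (N t : ℝ) / n t := inv_div _ _
    _ ≤ (N t).choose (n t) := div_le_choose (hn t) (hnN t)
    _ ≤ Gnm (N t) (M t) (n t) (m t) := by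
      exact_mod_cast Nat.le_mul_of_pos_right _ (Nat.choose_pos (hmM t))

lemma tendsto_mul_exp_neg_mul_log {κ : ℝ} (hκ : 1 < κ) :
    Tendsto (fun x : ℝ ↦ x * Real.exp (-(κ * Real.log x))) atTop (𝓝 0) := by
  refine (tendsto_rpow_neg_atTop (sub_pos.2 hκ)).congr' ?_
  filter_upwards [eventually_gt_atTop 0] with x hx
  rw [neg_sub, Real.rpow_sub hx, Real.rpow_one, Real.rpow_def_of_pos hx, Real.exp_neg,
    mul_comm κ, div_eq_mul_inv]

lemma tendsto_exp_neg_mul_sq {f : ι → ℝ} (hf : Tendsto f l atTop) {c : ℝ} (hc : 0 < c) :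
    Tendsto (fun t ↦ Real.exp (-(c * f t ^ 2))) l (𝓝 0) :=
  Real.tendsto_exp_neg_atTop_nhds_zero.comp <|
    ((tendsto_pow_atTop two_ne_zero).comp hf).const_mul_atTop hc

lemma tendsto_alphaErr_psiHatStar
    (hNM : Tendsto (fun t ↦ (N t : ℝ) * M t) l atTop)
    (hG : Tendsto (fun t ↦ (Gnm (N t) (M t) (n t) (m t) : ℝ)) l atTop)
    (hH : Tendsto H l atTop) {δ : ℝ} (hδ : 0 < δ) :
    Tendsto (fun t ↦ alphaErr (N t) (M t) (psiHatStar (N t) (M t) (n t) (m t) (H t)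
      √((2 + δ) * Real.log (Gnm (N t) (M t) (n t) (m t))))) l (𝓝 0) := by
  obtain ⟨c, hc₀, hc₁, hcδ⟩ : ∃ c : ℝ, 0 < c ∧ c < 1 ∧ 1 < c * (2 + δ) / 2 := by
    refine ⟨1 / (1 + δ / 4), by positivity, ?_, ?_⟩
    · rw [div_lt_one (by positivity)]
      linarith
    · field_simp
      linarith
  have hvar := (hNM.const_div_atTop (Var[fun x ↦ x ^ 2; gaussianReal 0 1])).div_const
    ((1 - c) ^ 2)
  have hlin := tendsto_exp_neg_mul_sq hH (half_pos hc₀)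
  have hscan := (tendsto_mul_exp_neg_mul_log hcδ).comp hG
  have hbound := (hvar.add hlin).add hscan
  simp only [zero_div, add_zero] at hbound
  refine squeeze_zero' (.of_forall fun t ↦ integral_nonneg (psiHatStar_nonneg _ _ _ _)) ?_ hbound
  filter_upwards [hNM.eventually_gt_atTop 0, hG.eventually_ge_atTop 1,
    hH.eventually_ge_atTop 0] with t hNM hG hH
  refine (alphaErr_psiHatStar_le hNM.ne' _ _ hH (Real.sqrt_nonneg _) hc₀.le hc₁).trans_eq ?_
  rw [Real.sq_sqrt (mul_nonneg (by positivity) (Real.log_nonneg hG)), Function.comp_apply]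
  ring_nf

lemma tendsto_betaErr_psiHatStar {S : (t : ι) → Fin (N t) → Fin (M t) → ℝ} {ε : ι → ℝ}
    (hS₀ : ∀ t i j, 0 ≤ S t i j) (hS : ∀ t i j, S t i j ≤ ε t * √((N t : ℝ) * M t))
    (hε : Tendsto ε l (𝓝 0)) (hH : Tendsto H l atTop)
    (hHO : (fun t ↦ H t ^ 2) =O[l] fun t ↦ tlin (N t) (M t) (uncurry (S t))) (T : ι → ℝ) :
    Tendsto (fun t ↦ betaErr (N t) (M t) (S t)
      (psiHatStar (N t) (M t) (n t) (m t) (H t) (T t))) l (𝓝 0) := by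
  set L := fun t ↦ tlin (N t) (M t) (uncurry (S t))
  have hL : Tendsto L l atTop := by
    have hL₀ (t : ι) : 0 ≤ L t :=
      div_nonneg (Finset.sum_nonneg fun _ _ ↦ hS₀ t _ _) (Real.sqrt_nonneg _)
    have hH_sq : Tendsto (fun t ↦ ‖H t ^ 2‖) l atTop :=
      tendsto_norm_atTop_atTop.comp ((tendsto_pow_atTop two_ne_zero).comp hH)
    simpa [Real.norm_of_nonneg (hL₀ _)] using hHO.trans_tendsto_norm_atTop hH_sq
  have hmean : (fun t ↦ 1 + ε t * L t) =o[l] L := by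
    have h₁ : (fun _ ↦ (1 : ℝ)) =o[l] L :=
      isLittleO_const_left.2 (.inr (tendsto_norm_atTop_atTop.comp hL))
    have h₂ : (fun t ↦ ε t * L t) =o[l] L := by
      simpa using ((isLittleO_one_iff ℝ).2 hε).mul_isBigO (isBigO_refl L l)
    exact h₁.add h₂
  have hvar : Tendsto (fun t ↦ 4 * (H t ^ 2 * (1 + ε t * L t) / L t ^ 2)) l (𝓝 0) := by
    simpa [sq] using ((hHO.mul_isLittleO hmean).tendsto_div_nhds_zero).const_mul 4
  have hlin := tendsto_exp_neg_mul_sq hL (c := 1 / 8) (by norm_num)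
  refine squeeze_zero' (.of_forall fun t ↦ integral_nonneg fun y ↦
    sub_nonneg.2 (psiHatStar_le_one _ _ _ _ y)) ?_ (by simpa using hvar.add hlin)
  filter_upwards [hL.eventually_gt_atTop 0] with t hLt
  convert betaErr_psiHatStar_le (hS₀ t) (hS t) hLt (n t) (m t) (H t) (T t) using 3
  ring

lemma isBigO_sq_tlin {a σ : ι → ℝ} (ha : ∀ t, 0 ≤ a t) (hσ : ∀ t, 0 < σ t)
    (hH : Tendsto H l atTop)
    (hHO : ∃ C : ℝ, ∀ᶠ t in l, H t ≤ C *
      (a t ^ 2 * ((n t : ℝ) * m t * ((n t : ℝ) / N t) * ((m t : ℝ) / M t)) / σ t ^ 2)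
        ^ ((1 : ℝ) / 4))
    {S : (t : ι) → Fin (N t) → Fin (M t) → ℝ}
    (hS : ∀ t, S t ∈ SAlt (N t) (M t) (n t) (m t) (a t)) :
    (fun t ↦ H t ^ 2) =O[l] fun t ↦ tlin (N t) (M t) (uncurry ((σ t)⁻¹ • S t)) := by
  obtain ⟨C, hC⟩ := hHO
  refine .of_bound (C ^ 2) ?_
  filter_upwards [hC, hH.eventually_ge_atTop 0] with t hCt hHt
  have hσt : 0 ≤ (σ t)⁻¹ := (inv_pos.2 (hσ t)).le
  have hL := le_tlin_of_mem_SAlt (mul_nonneg hσt (ha t)) (smul_mem_SAlt hσt (hS t))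
  calc
    ‖H t ^ 2‖ = H t ^ 2 := Real.norm_of_nonneg (sq_nonneg _)
    _ ≤ C ^ 2 * (n t * m t * ((σ t)⁻¹ * a t) / √((N t : ℝ) * M t)) := by
      rw [← sq_rpow_one_fourth_signal _ _ _ _ (ha t) (hσ t).le, ← mul_pow]
      gcongr
    _ ≤ C ^ 2 * ‖tlin (N t) (M t) (uncurry ((σ t)⁻¹ • S t))‖ := by
      gcongr
      exact hL.trans (le_abs_self _)

end Limits

theorem stmt9_general {ι : Type*} {l : Filter ι} (N M n m : ι → ℕ) (a σ H : ι → ℝ)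
    (ha : ∀ t, 0 ≤ a t) (hσ : ∀ t, 0 < σ t)
    (hNM : Tendsto (fun t ↦ (N t : ℝ) * M t) l atTop)
    (hG : Tendsto (fun t ↦ (Gnm (N t) (M t) (n t) (m t) : ℝ)) l atTop)
    (hH : Tendsto H l atTop)
    (hHO : ∃ C : ℝ, ∀ᶠ t in l, H t ≤ C *
      (a t ^ 2 * ((n t : ℝ) * m t * ((n t : ℝ) / N t) * ((m t : ℝ) / M t)) / σ t ^ 2)
        ^ ((1 : ℝ) / 4))
    (δ : ℝ) (hδ : 0 < δ) :
    Tendsto (fun t ↦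
        ∫ y, psiHatStar (N t) (M t) (n t) (m t) (H t)
            √((2 + δ) * Real.log (Gnm (N t) (M t) (n t) (m t) : ℝ)) y
          ∂(matLawV (N t) (M t) (σ t) fun _ _ ↦ 0))
      l (𝓝 0) ∧
    ∀ S : (t : ι) → Fin (N t) → Fin (M t) → ℝ,
      (∀ t, S t ∈ SAlt (N t) (M t) (n t) (m t) (a t)) →
      Tendsto (fun t ↦ (⨆ ij : Fin (N t) × Fin (M t), S t ij.1 ij.2) /
        (σ t * √((N t : ℝ) * M t))) l (𝓝 0) →
      Tendsto (fun t ↦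
          ∫ y, (1 - psiHatStar (N t) (M t) (n t) (m t) (H t)
              √((2 + δ) * Real.log (Gnm (N t) (M t) (n t) (m t) : ℝ)) y)
            ∂(matLawV (N t) (M t) (σ t) (S t)))
        l (𝓝 0) := by
  refine ⟨?_, fun S hS hε ↦ ?_⟩
  · simpa only [integral_psiHatStar_matLawV_zero _ _ _ _ (hσ _)] using
      tendsto_alphaErr_psiHatStar hNM hG hH hδ
  · simp only [integral_one_sub_psiHatStar_matLawV _ _ _ _ (hσ _)]
    have hS₀ (t i j) : 0 ≤ ((σ t)⁻¹ • S t) i j :=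
      mul_nonneg (inv_pos.2 (hσ t)).le (nonneg_of_mem_SAlt (ha t) (hS t) i j)
    exact tendsto_betaErr_psiHatStar hS₀ (fun t ↦ le_iSup_div_mul_sqrt (S t) (hσ t)) hε hH
      (isBigO_sq_tlin ha hσ hH hHO hS) _

/-- Theorem 5 (unknown variance): under the stated conditions on `a/σ`, the
studentized test `ψ̂*` with `H → ∞`, `H = O((a² n m p q/σ²)^{1/4})` and
`T_{nm} = √((2+δ) log G_{nm})` for sufficiently small `δ > 0` has first-type
error tending to `0` and second-type error tending to `0` along any family of
alternatives `S ∈ S_{nm,a}` with `max_{i,j} s_{ij}/(σ√(NM)) → 0`. -/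
theorem stmt9 (N M n m : ℕ → ℕ) (a σ H : ℕ → ℝ)
    (hb : ∀ t, 1 ≤ n t ∧ n t ≤ N t ∧ 1 ≤ m t ∧ m t ≤ M t)
    (ha : ∀ t, 0 < a t) (hσ : ∀ t, 0 < σ t)
    (hN : Tendsto N atTop atTop) (hM : Tendsto M atTop atTop)
    (hn : Tendsto n atTop atTop) (hm : Tendsto m atTop atTop)
    (hp : Tendsto (fun t => (n t : ℝ) / N t) atTop (nhds 0))
    (hq : Tendsto (fun t => (m t : ℝ) / M t) atTop (nhds 0))
    (hH : Tendsto H atTop atTop)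
    (hHO : ∃ C : ℝ, ∀ t, H t ≤ C *
      (a t ^ 2 * ((n t : ℝ) * m t * ((n t : ℝ) / N t) * ((m t : ℝ) / M t)) / σ t ^ 2)
        ^ ((1 : ℝ) / 4))
    (hcond :
      Tendsto (fun t => a t / σ t *
          Real.sqrt ((n t : ℝ) * m t * ((n t : ℝ) / N t) * ((m t : ℝ) / M t)))
        atTop atTop ∨
      1 < Filter.liminf (fun t =>
          a t / σ t * Real.sqrt ((n t : ℝ) * m t) /
            Real.sqrt (2 * ((n t : ℝ) * Real.log ((N t : ℝ) / n t) +
              (m t : ℝ) * Real.log ((M t : ℝ) / m t)))) atTop) :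
    ∃ δ₀ : ℝ, 0 < δ₀ ∧ ∀ δ : ℝ, 0 < δ → δ ≤ δ₀ →
      (Tendsto (fun t =>
          ∫ y, psiHatStar (N t) (M t) (n t) (m t) (H t)
              (Real.sqrt ((2 + δ) * Real.log (Gnm (N t) (M t) (n t) (m t) : ℝ))) y
            ∂(matLawV (N t) (M t) (σ t) fun _ _ => 0))
        atTop (nhds 0)) ∧
      ∀ S : (t : ℕ) → Fin (N t) → Fin (M t) → ℝ,
        (∀ t, S t ∈ SAlt (N t) (M t) (n t) (m t) (a t)) →
        Tendsto (fun t =>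
            (⨆ ij : Fin (N t) × Fin (M t), S t ij.1 ij.2) /
              (σ t * Real.sqrt ((N t : ℝ) * M t)))
          atTop (nhds 0) →
        Tendsto (fun t =>
            ∫ y, (1 - psiHatStar (N t) (M t) (n t) (m t) (H t)
                (Real.sqrt ((2 + δ) * Real.log (Gnm (N t) (M t) (n t) (m t) : ℝ))) y)
              ∂(matLawV (N t) (M t) (σ t) (S t)))
          atTop (nhds 0) := by
  refine ⟨1, one_pos, fun δ hδ _ ↦ ?_⟩
  have hNM : Tendsto (fun t ↦ (N t : ℝ) * M t) atTop atTop :=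
    (tendsto_natCast_atTop_atTop.comp hN).atTop_mul_atTop₀ (tendsto_natCast_atTop_atTop.comp hM)
  have hG := tendsto_Gnm_atTop (fun t ↦ (hb t).1) (fun t ↦ (hb t).2.1) (fun t ↦ (hb t).2.2.2) hp
  exact stmt9_general N M n m a σ H (fun t ↦ (ha t).le) hσ hNM hG hH
    (hHO.imp fun _ hC ↦ .of_forall hC) δ hδ
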